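/- Let k be a field with char k ≠ 2 and A a nonzero n×n Hermitian matrix over H. Then A has Jordan rank one if and only if dim_k(range L_A) = 4, where L_A : Hⁿ → Hⁿ is the k-linear map (x_u) ↦ (Σ_u a_{t,u}·x_u)_t. -/

import Mathlib

/-!
Forgetting the block structure turns `A` into a `2n × 2n` matrix over `k` (`flat`). Let `J` be
the block-diagonal symplectic matrix with blocks `!![0, 1; -1, 0]`. Conjugation on `H` is
`a ↦ -J₂ aᵀ J₂` with `J₂` the `2 × 2` block, so `A` is Hermitian iff `S = J A` is skew
(`isHerm_iff`). Three translations reduce the claim to skew matrices: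

* `L_A` is two copies of `A` acting on `k²ⁿ`, one for each column, so its range has dimension
  `2 * rank S` (`finrank_range_LA`);
* `2 * ⟨A, B⟩ = tr (A B)` (`two_mul_jip`);
* writing a Hermitian `B` as `T J` with `T` skew, `J (A B A) = S T S` and `tr (A B) = tr (S T)`.

It remains to see that a nonzero skew `S` has rank two iff `S T S = ½ tr (S T) S` for all skew
`T`. If it does, take `T = e_i e_jᵀ - e_j e_iᵀ` with `S i j ≠ 0`: then `S T S` is built from two
columns of `S` and is a nonzero multiple of `S`, so `S` has rank at most two, while the minor on
`i, j` is `(S i j)² ≠ 0` (`rank_eq_two_of_sandwich`). Conversely, if the rank is two, the vanishing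
of `3 × 3` minors gives the Plücker relations (`pluecker`), hence `S = v wᵀ - w vᵀ`, for which the
identity is a direct computation (`sandwich_of_rank_eq_two`).
-/


open Matrix

/-- 2×2 matrices over `k`: the split quaternions, with conjugation `adjugate`
and norm `det`. -/
abbrev M2 (k : Type*) [Field k] := Matrix (Fin 2) (Fin 2) k

variable {k : Type*} [Field k] {n : ℕ}

/-- A matrix with entries in `H = M₂(k)` is Hermitian if `a_{u,t} = adjugate (a_{t,u})`. -/
def IsHerm (A : Matrix (Fin n) (Fin n) (M2 k)) : Prop :=
  ∀ t u, A u t = (A t u).adjugate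

/-- The scalar pairing `⟨A,B⟩` on Hermitian matrices:
`Σ_{t<u} (Q(a_{t,u}+b_{t,u}) − Q(a_{t,u}) − Q(b_{t,u})) + Σ_t r_t s_t`, where
`r_t, s_t` are the scalars on the diagonals. -/
def jip (A B : Matrix (Fin n) (Fin n) (M2 k)) : k :=
  (∑ p ∈ Finset.univ.filter (fun p : Fin n × Fin n => p.1 < p.2),
      ((A p.1 p.2 + B p.1 p.2).det - (A p.1 p.2).det - (B p.1 p.2).det))
    + ∑ t, (A t t 0 0) * (B t t 0 0)

/-- A nonzero Hermitian matrix `A` has Jordan rank one if `A·B·A = ⟨A,B⟩•A`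
for every Hermitian `B`. -/
def JordanRankOne (A : Matrix (Fin n) (Fin n) (M2 k)) : Prop :=
  A ≠ 0 ∧ ∀ B : Matrix (Fin n) (Fin n) (M2 k), IsHerm B → A * B * A = jip A B • A

/-- `L_A : Hⁿ → Hⁿ`, `(x_u) ↦ (Σ_u a_{t,u}·x_u)_t`, as a `k`-linear map. -/
def LA (A : Matrix (Fin n) (Fin n) (M2 k)) : (Fin n → M2 k) →ₗ[k] (Fin n → M2 k) where
  toFun x := fun t => ∑ u, A t u * x u
  map_add' a b := by
    funext t
    simp [mul_add, Finset.sum_add_distrib]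
  map_smul' c a := by
    funext t
    simp [Matrix.mul_smul, Finset.smul_sum]

/-! ### Alternating matrices of rank two -/

section Alternating

variable {I : Type*}

private lemma skew_apply {S : Matrix I I k} (hS : Sᵀ = -S) (i j : I) : S j i = -S i j := by
  simpa using congrFun (congrFun hS i) j

private lemma skew_diag (h2 : (2 : k) ≠ 0) {S : Matrix I I k} (hS : Sᵀ = -S) (i : I) :
    S i i = 0 := by
  have h := skew_apply hS i i
  have : 2 * S i i = 0 := by linear_combination h
  simpa [h2] using this

variable [Fintype I]

/-- The submatrix on rows and columns `i, j` with `S i j ≠ 0` is invertible. -/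
private lemma two_le_rank (h2 : (2 : k) ≠ 0) {S : Matrix I I k} (hS : Sᵀ = -S) {i j : I}
    (hij : S i j ≠ 0) : 2 ≤ S.rank := by
  have h : IsUnit (S.submatrix ![i, j] ![i, j]) := by
    rw [Matrix.isUnit_iff_isUnit_det, isUnit_iff_ne_zero, Matrix.det_fin_two]
    simp [skew_diag h2 hS, skew_apply hS i j, hij]
  have := Matrix.rank_of_isUnit _ h
  have h' := S.rank_submatrix_le ![i, j] ![i, j]
  rw [Fintype.card_fin] at this
  omega

/-- Sandwiching the elementary skew matrix `e_i e_jᵀ - e_j e_iᵀ` between two copies of a skew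
matrix `S` gives a combination of two outer products of columns of `S`. -/
private lemma sandwich_apply [DecidableEq I] {S : Matrix I I k} (hS : Sᵀ = -S) (i j l m : I) :
    (S * (Matrix.single i j 1 - Matrix.single j i 1 : Matrix I I k) * S) l m
      = S i l * S m j - S j l * S m i := by
  rw [Matrix.mul_sub, Matrix.sub_mul, Matrix.sub_apply, Matrix.mul_assoc, Matrix.mul_assoc,
    Matrix.mul_apply, Matrix.mul_apply,
    Finset.sum_eq_single i, Finset.sum_eq_single j]
  · simp [skew_apply hS i l, skew_apply hS j l, skew_apply hS i m, skew_apply hS j m]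
  all_goals simp +contextual

private lemma rank_eq_two_of_sandwich [DecidableEq I] (h2 : (2 : k) ≠ 0) {S : Matrix I I k}
    (hS : Sᵀ = -S) (h0 : S ≠ 0)
    (h : ∀ T : Matrix I I k, Tᵀ = -T → ∃ c : k, S * T * S = c • S) : S.rank = 2 := by
  obtain ⟨i, j, hij⟩ : ∃ i j, S i j ≠ 0 := by
    by_contra! hc
    exact h0 (by ext i j; exact hc i j)
  refine le_antisymm ?_ (two_le_rank h2 hS hij)
  obtain ⟨c, hc⟩ := h (Matrix.single i j 1 - Matrix.single j i 1) (by simp)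
  have hc' : ∀ l m, S i l * S m j - S j l * S m i = c * S l m := fun l m => by
    rw [← sandwich_apply hS, hc]; rfl
  have hc0 : c ≠ 0 := by
    rintro rfl
    have := hc' i j
    simp [skew_diag h2 hS, skew_apply hS i j, hij] at this
  have hfac : S = (Matrix.of fun l (a : Fin 2) => ![S i l, - S j l] a) *
      (Matrix.of fun (a : Fin 2) m => c⁻¹ * ![S m j, S m i] a) := by
    ext l m
    simp only [Matrix.mul_apply, Fin.sum_univ_two, Matrix.of_apply, Matrix.cons_val_zero,
      Matrix.cons_val_one]
    field_simp
    linear_combination -(hc' l m)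
  rw [hfac]
  refine (Matrix.rank_mul_le_left _ _).trans ?_
  exact (Matrix.rank_le_card_width _).trans_eq (Fintype.card_fin 2)

/-- The Plücker relation: the minor of `S` on rows `i, j, l` and columns `i, j, m` is `S i j`
times the Pfaffian on `i, j, l, m`. -/
private lemma pluecker (h2 : (2 : k) ≠ 0) {S : Matrix I I k} (hS : Sᵀ = -S) (hr : S.rank = 2)
    {i j : I} (hij : S i j ≠ 0) (l m : I) :
    S i j * S l m = S i l * S j m - S i m * S j l := by
  have hdet : (S.submatrix ![i, j, l] ![i, j, m]).det = 0 := by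
    by_contra hne
    have := Matrix.rank_of_isUnit _
      ((Matrix.isUnit_iff_isUnit_det _).2 (isUnit_iff_ne_zero.2 hne))
    have h' := S.rank_submatrix_le ![i, j, l] ![i, j, m]
    rw [Fintype.card_fin] at this
    omega
  rw [Matrix.det_fin_three] at hdet
  simp [skew_diag h2 hS, skew_apply hS i j, skew_apply hS i l, skew_apply hS j l] at hdet
  apply mul_left_cancel₀ hij
  linear_combination hdet

/-- With `S = v wᵀ - w vᵀ`, both sides equal `2 (wᵀ T v) S`, as `vᵀ T v = wᵀ T w = 0`. -/
private lemma sandwich_of_rank_eq_two (h2 : (2 : k) ≠ 0) {S : Matrix I I k} (hS : Sᵀ = -S)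
    (h0 : S ≠ 0) (hr : S.rank = 2) {T : Matrix I I k} (hT : Tᵀ = -T) :
    (2 : k) • (S * T * S) = (S * T).trace • S := by
  obtain ⟨i, j, hij⟩ : ∃ i j, S i j ≠ 0 := by
    by_contra! hc
    exact h0 (by ext i j; exact hc i j)
  obtain ⟨v, w, rfl⟩ : ∃ v w : I → k, S = vecMulVec v w - vecMulVec w v := by
    refine ⟨fun l => (S i j)⁻¹ * S i l, S j, ?_⟩
    ext l m
    have := pluecker h2 hS hr hij l m
    simp only [Matrix.sub_apply, vecMulVec_apply]
    field_simp
    linear_combination this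
  have hswap (x y : I → k) : x ⬝ᵥ T *ᵥ y = -(y ⬝ᵥ T *ᵥ x) := by
    rw [Matrix.dotProduct_mulVec, ← Matrix.mulVec_transpose, hT, Matrix.neg_mulVec,
      neg_dotProduct, dotProduct_comm]
  have hself (x : I → k) : x ⬝ᵥ T *ᵥ x = 0 := by
    have : 2 * (x ⬝ᵥ T *ᵥ x) = 0 := by linear_combination hswap x x
    simpa [h2] using this
  have hvw := hswap v w
  have key (x y z t : I → k) :
      vecMulVec x y * T * vecMulVec z t = (y ⬝ᵥ T *ᵥ z) • vecMulVec x t := by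
    rw [Matrix.mul_assoc, Matrix.mul_vecMulVec, Matrix.vecMulVec_mul_vecMulVec]
    ext p q
    simp [vecMulVec_apply]
    try ring
  have htr (x y : I → k) : (vecMulVec x y * T).trace = y ⬝ᵥ T *ᵥ x := by
    rw [Matrix.vecMulVec_mul, Matrix.trace_vecMulVec, Matrix.dotProduct_mulVec, dotProduct_comm]
  simp only [Matrix.sub_mul, Matrix.mul_sub, key, Matrix.trace_sub, htr, hself, hvw]
  ext p q
  simp [vecMulVec_apply]
  ring

end Alternating

/-! ### Flattening quaternionic matrices -/

/-- The matrix over `k` of size `2n` obtained from an `n × n` matrix over `H = M₂(k)` by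
forgetting the block structure. -/
private def flat : Matrix (Fin n) (Fin n) (M2 k) ≃+* Matrix (Fin n × Fin 2) (Fin n × Fin 2) k :=
  Matrix.compRingEquiv (Fin n) (Fin 2) k

private lemma flat_apply (A : Matrix (Fin n) (Fin n) (M2 k)) (p q : Fin n × Fin 2) :
    flat A p q = A p.1 q.1 p.2 q.2 := rfl

private lemma flat_smul (c : k) (A : Matrix (Fin n) (Fin n) (M2 k)) :
    flat (c • A) = c • flat A := rfl

/-- The standard symplectic form on `k²ⁿ`: block diagonal with blocks `!![0, 1; -1, 0]`. -/
private def symp (k : Type*) [Field k] (n : ℕ) : Matrix (Fin n × Fin 2) (Fin n × Fin 2) k :=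
  flat (Matrix.diagonal fun _ => !![0, 1; -1, 0])

private lemma symp_mul_self : symp k n * symp k n = -1 := by
  rw [symp, ← map_mul, Matrix.diagonal_mul_diagonal, ← map_one flat, ← map_neg]
  congr 1
  ext t u a b
  by_cases h : t = u
  · subst h
    fin_cases a <;> fin_cases b <;> simp
  · simp [h]

private lemma symp_transpose : (symp k n)ᵀ = -symp k n := by
  ext ⟨t, a⟩ ⟨u, b⟩
  by_cases h : t = u
  · subst h
    fin_cases a <;> fin_cases b <;> simp [symp, flat_apply]
  · simp [symp, flat_apply, h, Ne.symm h]

private lemma symp_mul_flat (A : Matrix (Fin n) (Fin n) (M2 k)) :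
    symp k n * flat A = flat (Matrix.of fun t u => !![0, 1; -1, 0] * A t u) := by
  rw [symp, ← map_mul]
  congr 1
  ext t u : 2
  rw [Matrix.diagonal_mul]
  rfl

/-- In terms of `J = !![0, 1; -1, 0]`, conjugation reads `adjugate a = -J aᵀ J`, so Hermitian
means that the flattened matrix becomes skew after multiplication by the symplectic form. -/
private lemma isHerm_iff (A : Matrix (Fin n) (Fin n) (M2 k)) :
    IsHerm A ↔ (symp k n * flat A)ᵀ = -(symp k n * flat A) := by
  rw [symp_mul_flat]
  constructor
  · intro h
    ext ⟨t, a⟩ ⟨u, b⟩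
    have := h t u
    rw [Matrix.transpose_apply, Matrix.neg_apply, flat_apply, flat_apply]
    dsimp only [Matrix.of_apply]
    rw [this, Matrix.adjugate_fin_two]
    fin_cases a <;> fin_cases b <;> simp [Matrix.mul_apply, Fin.sum_univ_two]
  · intro h t u
    have h' (a b : Fin 2) := congrFun (congrFun h (t, a)) (u, b)
    simp only [Matrix.transpose_apply, Matrix.neg_apply, flat_apply, Matrix.of_apply] at h'
    have h00 := h' 0 0
    have h01 := h' 0 1
    have h10 := h' 1 0
    have h11 := h' 1 1
    simp [Matrix.mul_apply, Fin.sum_univ_two] at h00 h01 h10 h11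
    rw [Matrix.adjugate_fin_two]
    ext a b
    rw [neg_eq_iff_eq_neg] at h11
    fin_cases a <;> fin_cases b <;> simp [h00, h01, h10, h11]

/-! ### The pairing as a trace -/

private lemma two_mul_jip (h2 : (2 : k) ≠ 0) {A B : Matrix (Fin n) (Fin n) (M2 k)}
    (hA : IsHerm A) (hB : IsHerm B) : 2 * jip A B = (flat A * flat B).trace := by
  let g : Fin n × Fin n → k := fun p => (A p.1 p.2 * B p.2 p.1).trace
  have hdiag (t : Fin n) : g (t, t) = 2 * (A t t 0 0 * B t t 0 0) := by
    have hs {C : Matrix (Fin n) (Fin n) (M2 k)} (hC : IsHerm C) :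
        C t t 1 1 = C t t 0 0 ∧ C t t 0 1 = 0 := by
      have h := hC t t
      rw [Matrix.adjugate_fin_two] at h
      have h01 := congrFun (congrFun h 0) 1
      have h00 := congrFun (congrFun h 0) 0
      simp only [Matrix.of_apply, Matrix.cons_val', Matrix.cons_val_zero, Matrix.cons_val_one,
        Matrix.cons_val_fin_one] at h00 h01
      refine ⟨h00.symm, ?_⟩
      have : 2 * C t t 0 1 = 0 := by linear_combination h01
      simpa [h2] using this
    obtain ⟨ha, ha'⟩ := hs hA
    obtain ⟨hb, hb'⟩ := hs hB
    simp [g, Matrix.trace_fin_two, Matrix.mul_apply, ha, ha', hb, hb']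
    ring
  have hlt (p : Fin n × Fin n) :
      (A p.1 p.2 + B p.1 p.2).det - (A p.1 p.2).det - (B p.1 p.2).det = g p := by
    simp only [g, hB p.1 p.2, Matrix.adjugate_fin_two, Matrix.trace_fin_two, Matrix.det_fin_two,
      Matrix.mul_apply, Fin.sum_univ_two, Matrix.add_apply]
    simp
    ring
  have hsymm (p : Fin n × Fin n) : g p.swap = g p := by
    simp only [g, Prod.fst_swap, Prod.snd_swap, hB p.1 p.2, hA p.1 p.2, Matrix.adjugate_fin_two,
      Matrix.trace_fin_two, Matrix.mul_apply, Fin.sum_univ_two]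
    simp
    ring
  have htrace : (flat A * flat B).trace = ∑ p : Fin n × Fin n, g p := by
    rw [← map_mul, Matrix.trace, Fintype.sum_prod_type, Fintype.sum_prod_type]
    refine Finset.sum_congr rfl fun t _ => ?_
    simp only [g, Matrix.diag_apply, flat_apply, Matrix.mul_apply, Matrix.trace]
    simp only [Matrix.sum_apply]
    rw [Finset.sum_comm]
    rfl
  have hgt : ∑ p : Fin n × Fin n with p.2 < p.1, g p = ∑ p : Fin n × Fin n with p.1 < p.2, g p :=
    Finset.sum_equiv (Equiv.prodComm _ _) (by simp) fun p _ => (hsymm p).symm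
  have hd : ∑ p : Fin n × Fin n with p.1 = p.2, g p = ∑ t, g (t, t) := by
    symm
    refine Finset.sum_bij (fun t _ => (t, t)) (by simp) (by simp) ?_ (by simp)
    rintro ⟨a, b⟩ h
    simp at h
    exact ⟨a, by simp [h]⟩
  have hsplit : ∑ p : Fin n × Fin n, g p = ∑ p : Fin n × Fin n with p.1 < p.2, g p
      + ∑ p : Fin n × Fin n with p.2 < p.1, g p + ∑ p : Fin n × Fin n with p.1 = p.2, g p := by
    simp only [Finset.sum_filter, ← Finset.sum_add_distrib]
    refine Finset.sum_congr rfl fun p _ => ?_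
    rcases lt_trichotomy p.1 p.2 with h | h | h
    · simp [h, h.not_gt, h.ne]
    · simp [h]
    · simp [h, h.not_gt, h.ne']
  rw [htrace, hsplit, hgt, hd, jip, Finset.sum_congr rfl fun p _ => hlt p, mul_add,
    Finset.mul_sum, Finset.mul_sum, ← Finset.sum_add_distrib]
  simp only [hdiag, two_mul]
  rfl

/-! ### The rank of `L_A` -/

/-- `L_A` acts on the two columns of its `2n × 2` argument separately, each time by `flat A`. -/
private lemma finrank_range_LA (A : Matrix (Fin n) (Fin n) (M2 k)) :
    Module.finrank k (LinearMap.range (LA A)) = 2 * (flat A).rank := by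
  have hcol (x : Fin n → M2 k) (c : Fin 2) :
      (fun p : Fin n × Fin 2 => LA A x p.1 p.2 c) = flat A *ᵥ fun q => x q.1 q.2 c := by
    ext p
    simp [LA, Matrix.mulVec, dotProduct, Fintype.sum_prod_type, flat_apply, Matrix.sum_apply,
      Matrix.mul_apply]
  let f : LinearMap.range (LA A) →ₗ[k] Fin 2 → LinearMap.range (flat A).mulVecLin :=
    { toFun := fun y c => ⟨fun p => y.1 p.1 p.2 c, by
        obtain ⟨_, x, rfl⟩ := y
        exact ⟨fun q => x q.1 q.2 c, (hcol x c).symm⟩⟩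
      map_add' := fun _ _ => rfl
      map_smul' := fun _ _ => rfl }
  have hf : Function.Bijective f := by
    constructor
    · intro y z h
      ext t a c
      exact congrFun (congrArg Subtype.val (congrFun h c)) (t, a)
    · intro z
      choose x hx using fun c => (z c).2
      refine ⟨⟨_, fun t => Matrix.of fun a c => x c (t, a), rfl⟩, ?_⟩
      funext c
      exact Subtype.ext ((hcol _ c).trans (hx c))
  rw [(LinearEquiv.ofBijective f hf).finrank_eq, Module.finrank_pi_fintype]
  simp [Matrix.rank]

private lemma rank_symp_mul (A : Matrix (Fin n) (Fin n) (M2 k)) :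
    (symp k n * flat A).rank = (flat A).rank := by
  refine Matrix.rank_mul_eq_right_of_isUnit_det _ _ ?_
  rw [← Matrix.isUnit_iff_isUnit_det]
  refine ⟨⟨symp k n, -symp k n, ?_, ?_⟩, rfl⟩ <;> simp [symp_mul_self]

private lemma symp_mul_cancel {X Y : Matrix (Fin n × Fin 2) (Fin n × Fin 2) k}
    (h : symp k n * X = symp k n * Y) : X = Y := by
  simpa [← Matrix.mul_assoc, symp_mul_self] using congrArg (symp k n * ·) h

theorem stmt16 (k : Type*) [Field k] (hchar : (2 : k) ≠ 0) (n : ℕ)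
    (A : Matrix (Fin n) (Fin n) (M2 k)) (hA : IsHerm A) (hA0 : A ≠ 0) :
    JordanRankOne A ↔ Module.finrank k ↥(LinearMap.range (LA A)) = 4 := by
  have hS := (isHerm_iff A).1 hA
  have hS0 : symp k n * flat A ≠ 0 := fun h =>
    hA0 (flat.injective (by rw [map_zero]; exact symp_mul_cancel (by rw [h, mul_zero])))
  have hrank : Module.finrank k (LinearMap.range (LA A)) = 4 ↔
      (symp k n * flat A).rank = 2 := by
    rw [finrank_range_LA, rank_symp_mul]; omega
  rw [hrank]
  constructor
  · rintro ⟨-, h⟩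
    refine rank_eq_two_of_sandwich hchar hS hS0 fun T hT => ?_
    have hB : IsHerm (flat.symm (T * symp k n)) := by
      rw [isHerm_iff, RingEquiv.apply_symm_apply]
      simp [Matrix.transpose_mul, symp_transpose, hT, Matrix.mul_assoc]
    refine ⟨jip A (flat.symm (T * symp k n)), ?_⟩
    have := congrArg (fun M => symp k n * flat M) (h _ hB)
    simpa [map_mul, flat_smul, Matrix.mul_assoc] using this
  · intro hr
    refine ⟨hA0, fun B hB => ?_⟩
    -- With `J = symp k n`, this `T` satisfies `T * J = flat B`.
    have hT : (-(flat B * symp k n))ᵀ = -(-(flat B * symp k n)) := by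
      have h := (isHerm_iff B).1 hB
      have hJ : flat B * symp k n = -(symp k n * (symp k n * flat B) * symp k n) := by
        simp [← Matrix.mul_assoc, symp_mul_self]
      rw [hJ, neg_neg, Matrix.transpose_mul, Matrix.transpose_mul, h, symp_transpose]
      simp [Matrix.mul_assoc]
    have h := sandwich_of_rank_eq_two hchar hS hS0 hr hT
    have htr : (symp k n * flat A * -(flat B * symp k n)).trace = 2 * jip A B := by
      rw [two_mul_jip hchar hA hB, Matrix.trace_mul_comm]
      simp only [Matrix.neg_mul, Matrix.mul_assoc]
      rw [← Matrix.mul_assoc (symp k n), symp_mul_self]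
      simp [Matrix.trace_mul_comm (flat B)]
    have hprod : symp k n * flat A * -(flat B * symp k n) * (symp k n * flat A) =
        symp k n * flat (A * B * A) := by
      simp only [Matrix.mul_assoc, Matrix.neg_mul, Matrix.mul_neg, map_mul]
      rw [← Matrix.mul_assoc (symp k n) (symp k n), symp_mul_self]
      simp
    rw [htr, hprod, mul_smul] at h
    have h' := smul_right_injective _ hchar h
    apply flat.injective
    apply symp_mul_cancel
    rw [h', flat_smul, Matrix.mul_smul]
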